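/- (Local uncertainty principle.) For every dimension d ≥ 1 there exists a constant C₁ > 0 depending only on d such that the following holds. For every N ≥ 1, every smooth compactly supported Ψ : (ℝ^d)^N → ℂ with ∫_{(ℝ^d)^N} |Ψ|² = 1, and every half-open cube Q ⊂ ℝ^d, one has ∫_{(ℝ^d)^N} ∑_{j=1}^N 1_Q(x_j) ‖∇_{x_j} Ψ(x)‖² dx ≥ C₁ (∫_Q ρ_Ψ^{1+2/d}) / (∫_Q ρ_Ψ)^{2/d} − C₁^{−1} |Q|^{−2/d} ∫_Q ρ_Ψ, with the convention that the first term on the right is zero when ∫_Q ρ_Ψ = 0. -/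

import Mathlib

open MeasureTheory

/-- The half-open axis-parallel cube in `ℝ^d` with corner `c` and side length `a`. -/
def cube (d : ℕ) (c : Fin d → ℝ) (a : ℝ) : Set (Fin d → ℝ) :=
  {x | ∀ i, c i ≤ x i ∧ x i < c i + a}

/-- The one-body density of an `N`-body wave function `Ψ` on `(ℝ^d)^N`:
`ρ_Ψ(y) = ∑_j ∫ |Ψ(x_1, …, x_{j-1}, y, x_{j+1}, …, x_N)|² ∏_{k≠j} dx_k`. -/
noncomputable def density (d N : ℕ) (Ψ : (Fin N → Fin d → ℝ) → ℂ) (y : Fin d → ℝ) : ℝ :=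
  ∑ j : Fin N,
    ∫ x' : {k : Fin N // k ≠ j} → Fin d → ℝ,
      ‖Ψ (fun k => if h : k = j then y else x' ⟨k, h⟩)‖ ^ 2

lemma lu_line_bound (g φ : ℝ → ℝ) (hg : Continuous g) (hφ : Continuous φ)
    (hφ0 : ∀ t, 0 ≤ φ t)
    (hder : ∀ t, ∃ D, HasDerivAt g D t ∧ |D| ≤ φ t) (c a : ℝ) (ha : 0 < a)
    (x : ℝ) (hx : x ∈ Set.Ico c (c + a)) :
    g x ≤ ∫ t in Set.Ico c (c + a), (φ t + g t / a) := by
  choose D hD hDle using hder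
  have hint : ∀ h : ℝ → ℝ, Continuous h → IntegrableOn h (Set.Ico c (c + a)) := fun h hh =>
    (hh.continuousOn.integrableOn_Icc (a := c) (b := c + a)).mono_set Set.Ico_subset_Icc_self
  have sub : ∀ u v, u ≤ v → u ∈ Set.Ico c (c + a) → v ∈ Set.Ico c (c + a) →
      ∫ y in u..v, φ y ≤ ∫ y in Set.Ico c (c + a), φ y := by
    intro u v huv hu hv
    rw [intervalIntegral.integral_of_le huv]
    apply setIntegral_mono_set (hint φ hφ)
    · exact Filter.Eventually.of_forall hφ0
    · refine Filter.Eventually.of_forall fun y hy => ?_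
      exact ⟨hu.1.trans hy.1.le, hy.2.trans_lt hv.2⟩
  have key : ∀ t ∈ Set.Ico c (c + a), g x ≤ g t + ∫ y in Set.Ico c (c + a), φ y := by
    intro t ht
    rcases le_total t x with h | h
    · have := intervalIntegral.sub_le_integral_of_hasDeriv_right_of_le h hg.continuousOn
        (fun y _ => (hD y).hasDerivWithinAt) hφ.continuousOn.integrableOn_Icc
        (fun y _ => (le_abs_self _).trans (hDle y))
      have := sub t x h ht hx
      linarith
    · have := intervalIntegral.sub_le_integral_of_hasDeriv_right_of_le h hg.neg.continuousOn
        (fun y _ => (hD y).neg.hasDerivWithinAt) hφ.continuousOn.integrableOn_Icc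
        (fun y _ => (neg_le_abs _).trans (hDle y))
      have := sub x t h hx ht
      simp only [Pi.neg_apply] at *
      linarith
  have h2 := setIntegral_mono_on (μ := volume) (hint _ continuous_const)
    (hint _ (hg.add continuous_const)) measurableSet_Ico key
  simp only [Pi.add_apply] at h2
  rw [integral_add (hint g hg) (hint _ continuous_const)] at h2
  simp only [setIntegral_const, Measure.real, Real.volume_Ico, add_sub_cancel_left,
    ENNReal.toReal_ofReal ha.le, smul_eq_mul] at h2
  rw [integral_add (hint φ hφ) (hint _ (hg.div_const a)), integral_div]
  have : a * g x ≤ a * ((∫ t in Set.Ico c (c + a), φ t) + (∫ t in Set.Ico c (c + a), g t) / a) := by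
    rw [mul_add, mul_div_cancel₀ _ ha.ne']; linarith
  exact le_of_mul_le_mul_left this ha

lemma lu_cube_eq (d : ℕ) (c : Fin d → ℝ) (a : ℝ) :
    cube d c a = Set.univ.pi (fun i => Set.Ico (c i) (c i + a)) := by
  ext x; simp [cube, Set.mem_pi]

lemma lu_cube_meas (d : ℕ) (c : Fin d → ℝ) (a : ℝ) : MeasurableSet (cube d c a) := by
  rw [lu_cube_eq]; exact MeasurableSet.univ_pi (fun i => measurableSet_Ico)

lemma lu_cube_restrict (d : ℕ) (c : Fin d → ℝ) (a : ℝ) :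
    (volume : Measure (Fin d → ℝ)).restrict (cube d c a)
      = Measure.pi (fun i => (volume : Measure ℝ).restrict (Set.Ico (c i) (c i + a))) := by
  rw [lu_cube_eq, volume_pi, Measure.restrict_pi_pi]

lemma lu_cube_int (d : ℕ) (c : Fin d → ℝ) (a : ℝ) (f : (Fin d → ℝ) → ℝ) (hf : Continuous f) :
    IntegrableOn f (cube d c a) := by
  have : IntegrableOn f (Set.Icc c (fun i => c i + a)) :=
    hf.continuousOn.integrableOn_compact isCompact_Icc
  refine this.mono_set ?_
  intro x hx
  exact ⟨fun i => (hx i).1, fun i => (hx i).2.le⟩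

/-- Real Hölder inequality in interpolation form. -/
lemma lu_holder {α : Type*} [MeasurableSpace α] {μ : Measure α} (f g : α → ℝ)
    (hf : Integrable f μ) (hg : Integrable g μ) (hf0 : ∀ x, 0 ≤ f x) (hg0 : ∀ x, 0 ≤ g x)
    (p q : ℝ) (hp : 0 ≤ p) (hq : 0 ≤ q) (hpq : p + q = 1) :
    ∫ x, f x ^ p * g x ^ q ∂μ ≤ (∫ x, f x ∂μ) ^ p * (∫ x, g x ∂μ) ^ q := by
  have hm : AEStronglyMeasurable (fun x => f x ^ p * g x ^ q) μ :=
    ((hf.aemeasurable.pow_const p).mul (hg.aemeasurable.pow_const q)).aestronglyMeasurable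
  rw [integral_eq_lintegral_of_nonneg_ae (Filter.Eventually.of_forall fun x =>
    mul_nonneg (Real.rpow_nonneg (hf0 x) _) (Real.rpow_nonneg (hg0 x) _)) hm]
  have h := ENNReal.lintegral_mul_norm_pow_le (μ := μ) hf.aemeasurable.ennreal_ofReal
    hg.aemeasurable.ennreal_ofReal hp hq hpq
  rw [← ofReal_integral_eq_lintegral_ofReal hf (Filter.Eventually.of_forall hf0),
    ← ofReal_integral_eq_lintegral_ofReal hg (Filter.Eventually.of_forall hg0),
    ENNReal.ofReal_rpow_of_nonneg (integral_nonneg hf0) hp,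
    ENNReal.ofReal_rpow_of_nonneg (integral_nonneg hg0) hq,
    ← ENNReal.ofReal_mul (Real.rpow_nonneg (integral_nonneg hf0) _)] at h
  apply ENNReal.toReal_le_of_le_ofReal
  · exact mul_nonneg (Real.rpow_nonneg (integral_nonneg hf0) _)
      (Real.rpow_nonneg (integral_nonneg hg0) _)
  · refine le_trans (le_of_eq ?_) h
    apply lintegral_congr
    intro x
    rw [ENNReal.ofReal_rpow_of_nonneg (hf0 x) hp, ENNReal.ofReal_rpow_of_nonneg (hg0 x) hq,
      ← ENNReal.ofReal_mul (Real.rpow_nonneg (hf0 x) _)]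

lemma lu_line_cube (d : ℕ) (f φ : (Fin d → ℝ) → ℝ) (hf : Continuous f) (hφ : Continuous φ)
    (hf0 : ∀ x, 0 ≤ f x) (hφ0 : ∀ x, 0 ≤ φ x)
    (hder : ∀ y p, ∃ D, HasDerivAt (fun t => f (Function.update y p t)) D (y p) ∧ |D| ≤ φ y)
    (c : Fin d → ℝ) (a : ℝ) (ha : 0 < a) (x : Fin d → ℝ) (hx : x ∈ cube d c a) (i : Fin d) :
    ENNReal.ofReal (f x) ≤ ∫⁻ t in Set.Ico (c i) (c i + a),
      ENNReal.ofReal (φ (Function.update x i t) + f (Function.update x i t) / a) := by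
  have hu : Continuous (fun t : ℝ => Function.update x i t) :=
    continuous_const.update i continuous_id
  have h := lu_line_bound (fun t => f (Function.update x i t)) (fun t => φ (Function.update x i t))
    (hf.comp hu) (hφ.comp hu) (fun t => hφ0 _)
    (fun t => by simpa using hder (Function.update x i t) i) (c i) a ha (x i) (hx i)
  rw [Function.update_eq_self] at h
  rw [← ofReal_integral_eq_lintegral_ofReal]
  · exact ENNReal.ofReal_le_ofReal h
  · have hc : Continuous (fun t => φ (Function.update x i t) + f (Function.update x i t) / a) :=
      (hφ.comp hu).add ((hf.comp hu).div_const a)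
    exact (hc.continuousOn.integrableOn_Icc (a := c i) (b := c i + a)).mono_set
      Set.Ico_subset_Icc_self
  · exact Filter.Eventually.of_forall fun t =>
      add_nonneg (hφ0 _) (div_nonneg (hf0 _) ha.le)

/-- Gagliardo's inequality on a cube. -/
lemma lu_gagliardo (d : ℕ) (hd : 2 ≤ d) (f φ : (Fin d → ℝ) → ℝ) (hf : Continuous f)
    (hφ : Continuous φ) (hf0 : ∀ x, 0 ≤ f x) (hφ0 : ∀ x, 0 ≤ φ x)
    (hder : ∀ y p, ∃ D, HasDerivAt (fun t => f (Function.update y p t)) D (y p) ∧ |D| ≤ φ y)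
    (c : Fin d → ℝ) (a : ℝ) (ha : 0 < a) :
    ∫ x in cube d c a, f x ^ ((d : ℝ) / (d - 1)) ≤
      (∫ x in cube d c a, (φ x + f x / a)) ^ ((d : ℝ) / (d - 1)) := by
  have hd' : (2 : ℝ) ≤ d := by exact_mod_cast hd
  have hp0 : 0 ≤ (d : ℝ) / (d - 1) := div_nonneg (by linarith) (by linarith)
  have hw : Continuous (fun x => φ x + f x / a) := hφ.add (hf.div_const a)
  have hw0 : ∀ x, 0 ≤ φ x + f x / a := fun x => add_nonneg (hφ0 _) (div_nonneg (hf0 _) ha.le)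
  have hconj : Real.HolderConjugate (Fintype.card (Fin d)) ((d : ℝ) / (d - 1)) := by
    rw [Fintype.card_fin]
    exact Real.HolderConjugate.conjExponent (by linarith)
  have h := lintegral_prod_lintegral_pow_le
    (fun i => (volume : Measure ℝ).restrict (Set.Ico (c i) (c i + a))) hconj
    (f := fun x => ENNReal.ofReal (φ x + f x / a)) hw.measurable.ennreal_ofReal
  rw [← lu_cube_restrict, ← ofReal_integral_eq_lintegral_ofReal (lu_cube_int d c a _ hw)
    (Filter.Eventually.of_forall hw0),
    ENNReal.ofReal_rpow_of_nonneg (integral_nonneg hw0) hp0] at h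
  rw [integral_eq_lintegral_of_nonneg_ae (Filter.Eventually.of_forall fun x =>
    Real.rpow_nonneg (hf0 x) _)
    ((hf.rpow_const (fun x => Or.inr hp0)).aestronglyMeasurable)]
  apply ENNReal.toReal_le_of_le_ofReal
  · exact Real.rpow_nonneg (integral_nonneg hw0) _
  refine le_trans ?_ h
  apply setLIntegral_mono' (lu_cube_meas d c a)
  intro x hx
  have hq : 0 ≤ (1 : ℝ) / (Fintype.card (Fin d) - 1) := by
    rw [Fintype.card_fin]; exact div_nonneg (by linarith) (by linarith)
  calc ENNReal.ofReal (f x ^ ((d : ℝ) / (d - 1)))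
      = ∏ i : Fin d, ENNReal.ofReal (f x) ^ ((1 : ℝ) / (Fintype.card (Fin d) - 1)) := by
        rw [Finset.prod_const, Finset.card_univ, ← ENNReal.rpow_natCast, ← ENNReal.rpow_mul,
          ← ENNReal.ofReal_rpow_of_nonneg (hf0 x) hp0]
        congr 1
        rw [Fintype.card_fin]; ring
    _ ≤ _ := by
        apply Finset.prod_le_prod'
        intro i _
        exact ENNReal.rpow_le_rpow (lu_line_cube d f φ hf hφ hf0 hφ0 hder c a ha x hx i) hq

lemma lu_sup_one (f φ : (Fin 1 → ℝ) → ℝ) (hf : Continuous f)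
    (hφ : Continuous φ) (hf0 : ∀ x, 0 ≤ f x) (hφ0 : ∀ x, 0 ≤ φ x)
    (hder : ∀ y p, ∃ D, HasDerivAt (fun t => f (Function.update y p t)) D (y p) ∧ |D| ≤ φ y)
    (c : Fin 1 → ℝ) (a : ℝ) (ha : 0 < a) (x : Fin 1 → ℝ) (hx : x ∈ cube 1 c a) :
    f x ≤ ∫ x in cube 1 c a, (φ x + f x / a) := by
  have hw : Continuous (fun x => φ x + f x / a) := hφ.add (hf.div_const a)
  have hw0 : ∀ x, 0 ≤ φ x + f x / a := fun x => add_nonneg (hφ0 _) (div_nonneg (hf0 _) ha.le)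
  have h := lu_line_cube 1 f φ hf hφ hf0 hφ0 hder c a ha x hx 0
  have e : (volume : Measure (Fin 1 → ℝ)).restrict (cube 1 c a) =
      Measure.pi (fun _ : Fin 1 => (volume : Measure ℝ).restrict (Set.Ico (c 0) (c 0 + a))) := by
    rw [lu_cube_restrict]
    congr 1
    funext i
    rw [Subsingleton.elim i 0]
  have mp : MeasurePreserving (MeasurableEquiv.funUnique (Fin 1) ℝ)
      ((volume : Measure (Fin 1 → ℝ)).restrict (cube 1 c a))
      ((volume : Measure ℝ).restrict (Set.Ico (c 0) (c 0 + a))) := by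
    rw [e]
    convert measurePreserving_funUnique
      ((volume : Measure ℝ).restrict (Set.Ico (c 0) (c 0 + a))) (Fin 1) <;> rfl
  have h3 := mp.lintegral_comp (f := fun t => ENNReal.ofReal (φ (Function.update x 0 t) + f (Function.update x 0 t) / a))
    (by
      have hu : Continuous (fun t : ℝ => Function.update x 0 t) :=
        continuous_const.update 0 continuous_id
      exact (hw.comp hu).measurable.ennreal_ofReal)
  rw [← h3] at h
  have h4 : ∀ y : Fin 1 → ℝ, Function.update x 0 ((MeasurableEquiv.funUnique (Fin 1) ℝ) y) = y := by
    intro y; funext i; rw [Subsingleton.elim i 0]; simp [MeasurableEquiv.funUnique]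
  simp only [h4] at h
  rw [← ofReal_integral_eq_lintegral_ofReal (lu_cube_int 1 c a _ hw)
    (Filter.Eventually.of_forall hw0)] at h
  exact (ENNReal.ofReal_le_ofReal_iff (integral_nonneg hw0)).1 h

lemma lu_pointwise (r u s a : ℝ) (hr : 0 ≤ r) (hu : 0 ≤ u) (hs : 1 ≤ s) (hs' : s ≤ 3 / 2)
    (ha : 0 < a) :
    s * r ^ (s - 1) * (2 * √r * √u) + r ^ s / a ≤
      √18 * ((r ^ (2 * s - 1)) ^ (1 / 2 : ℝ) * (u + r / a ^ 2) ^ (1 / 2 : ℝ)) := by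
  rcases hr.eq_or_lt with h | h
  · subst h
    rw [Real.zero_rpow (by linarith : s ≠ 0), Real.zero_rpow (by linarith : 2 * s - 1 ≠ 0)]
    simp
  · have e1 : (r ^ (2 * s - 1)) ^ (1 / 2 : ℝ) = r ^ (s - 1) * √r := by
      rw [← Real.rpow_mul h.le, Real.sqrt_eq_rpow, ← Real.rpow_add h]; congr 1; ring
    have e2 : r ^ s = r ^ (s - 1) * √r * √r := by
      rw [mul_assoc, Real.mul_self_sqrt h.le, ← Real.rpow_add_one h.ne']; congr 1; ring
    have key : 2 * s * √u + √r / a ≤ √18 * √(u + r / a ^ 2) := by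
      rw [← Real.sqrt_mul (by norm_num)]
      apply Real.le_sqrt_of_sq_le
      have hu2 : √u ^ 2 = u := Real.sq_sqrt hu
      have hr2 : (√r / a) ^ 2 = r / a ^ 2 := by rw [div_pow, Real.sq_sqrt hr]
      have h1 : 2 * s * √u + √r / a ≤ 3 * √u + √r / a := by
        have := Real.sqrt_nonneg u
        nlinarith
      have h0 : 0 ≤ 2 * s * √u + √r / a := by positivity
      calc (2 * s * √u + √r / a) ^ 2 ≤ (3 * √u + √r / a) ^ 2 := by gcongr
        _ ≤ 18 * (√u ^ 2 + (√r / a) ^ 2) := by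
            nlinarith [sq_nonneg (3 * √u - √r / a), sq_nonneg (√r / a)]
        _ = _ := by rw [hu2, hr2]
    rw [e1, e2, ← Real.sqrt_eq_rpow]
    have h3 : 0 ≤ r ^ (s - 1) * √r := by positivity
    calc _ = r ^ (s - 1) * √r * (2 * s * √u + √r / a) := by ring
      _ ≤ r ^ (s - 1) * √r * (√18 * √(u + r / a ^ 2)) := mul_le_mul_of_nonneg_left key h3
      _ = _ := by ring

lemma lu_W (d : ℕ) (ρ τ : (Fin d → ℝ) → ℝ) (hρ : Continuous ρ) (hτ : Continuous τ)
    (hρ0 : ∀ x, 0 ≤ ρ x) (hτ0 : ∀ x, 0 ≤ τ x) (s : ℝ) (hs : 1 ≤ s) (hs' : s ≤ 3 / 2)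
    (c : Fin d → ℝ) (a : ℝ) (ha : 0 < a) :
    ∫ x in cube d c a, (s * ρ x ^ (s - 1) * (2 * √(ρ x) * √(τ x)) + ρ x ^ s / a) ≤
      √18 * ((∫ x in cube d c a, ρ x ^ (2 * s - 1)) ^ (1 / 2 : ℝ) *
        ((∫ x in cube d c a, τ x) + (∫ x in cube d c a, ρ x) / a ^ 2) ^ (1 / 2 : ℝ)) := by
  have c1 : ∀ q : ℝ, 0 ≤ q → Continuous (fun x => ρ x ^ q) := fun q hq =>
    hρ.rpow_const (fun x => Or.inr hq)
  have ch : Continuous (fun x => τ x + ρ x / a ^ 2) := hτ.add (hρ.div_const _)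
  have h0 : ∀ x, 0 ≤ τ x + ρ x / a ^ 2 := fun x =>
    add_nonneg (hτ0 x) (div_nonneg (hρ0 x) (by positivity))
  have hH := lu_holder (μ := volume.restrict (cube d c a)) (fun x => ρ x ^ (2 * s - 1))
    (fun x => τ x + ρ x / a ^ 2) (lu_cube_int d c a _ (c1 _ (by linarith)))
    (lu_cube_int d c a _ ch) (fun x => Real.rpow_nonneg (hρ0 x) _) h0 (1 / 2) (1 / 2)
    (by norm_num) (by norm_num) (by norm_num)
  have e : ∫ x in cube d c a, (τ x + ρ x / a ^ 2) =
      (∫ x in cube d c a, τ x) + (∫ x in cube d c a, ρ x) / a ^ 2 := by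
    rw [integral_add (lu_cube_int d c a _ hτ) (lu_cube_int d c a _ (hρ.div_const _)), integral_div]
  rw [← e]
  refine le_trans ?_ (mul_le_mul_of_nonneg_left hH (Real.sqrt_nonneg _))
  rw [← integral_const_mul]
  apply integral_mono
  · apply lu_cube_int
    have := c1 (s - 1) (by linarith)
    have := c1 s (by linarith)
    fun_prop
  · apply lu_cube_int
    exact continuous_const.mul (((c1 _ (by linarith)).rpow_const (fun x => Or.inr (by norm_num))).mul
      (ch.rpow_const (fun x => Or.inr (by norm_num))))
  · intro x
    exact lu_pointwise (ρ x) (τ x) s a (hρ0 x) (hτ0 x) hs hs' ha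

lemma lu_der_pow (d : ℕ) (ρ τ : (Fin d → ℝ) → ℝ)
    (hρ0 : ∀ x, 0 ≤ ρ x)
    (hder : ∀ y p, ∃ D, HasDerivAt (fun t => ρ (Function.update y p t)) D (y p) ∧
      |D| ≤ 2 * √(ρ y) * √(τ y)) (s : ℝ) (hs : 1 ≤ s) :
    ∀ y p, ∃ D, HasDerivAt (fun t => ρ (Function.update y p t) ^ s) D (y p) ∧
      |D| ≤ s * ρ y ^ (s - 1) * (2 * √(ρ y) * √(τ y)) := by
  intro y p
  obtain ⟨D, hD, hle⟩ := hder y p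
  refine ⟨_, hD.rpow_const (Or.inr hs), ?_⟩
  rw [Function.update_eq_self, abs_mul, abs_mul, abs_of_nonneg (by linarith : (0:ℝ) ≤ s),
    abs_of_nonneg (Real.rpow_nonneg (hρ0 y) _)]
  have : 0 ≤ s * ρ y ^ (s - 1) := mul_nonneg (by linarith) (Real.rpow_nonneg (hρ0 y) _)
  calc |D| * s * ρ y ^ (s - 1) = s * ρ y ^ (s - 1) * |D| := by ring
    _ ≤ _ := mul_le_mul_of_nonneg_left hle this

lemma lu_core (d : ℕ) (hd : 1 ≤ d) (ρ τ : (Fin d → ℝ) → ℝ) (hρ : Continuous ρ)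
    (hτ : Continuous τ) (hρ0 : ∀ x, 0 ≤ ρ x) (hτ0 : ∀ x, 0 ≤ τ x)
    (hder : ∀ y p, ∃ D, HasDerivAt (fun t => ρ (Function.update y p t)) D (y p) ∧
      |D| ≤ 2 * √(ρ y) * √(τ y))
    (c : Fin d → ℝ) (a : ℝ) (ha : 0 < a) :
    ∫ x in cube d c a, ρ x ^ (1 + 2 / (d : ℝ)) ≤
      18 * ((∫ x in cube d c a, ρ x) ^ (2 / (d : ℝ)) *
        ((∫ x in cube d c a, τ x) + (∫ x in cube d c a, ρ x) / a ^ 2)) := by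
  have hM0 : 0 ≤ ∫ x in cube d c a, ρ x := integral_nonneg hρ0
  have hK0 : 0 ≤ (∫ x in cube d c a, τ x) + (∫ x in cube d c a, ρ x) / a ^ 2 :=
    add_nonneg (integral_nonneg hτ0) (div_nonneg hM0 (by positivity))
  have c1 : ∀ q : ℝ, 0 ≤ q → Continuous (fun x => ρ x ^ q) := fun q hq =>
    hρ.rpow_const (fun x => Or.inr hq)
  rcases hd.eq_or_lt with h1 | h2
  · subst h1
    have hW := lu_W 1 ρ τ hρ hτ hρ0 hτ0 1 le_rfl (by norm_num) c a ha
    norm_num at hW ⊢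
    set M := ∫ x in cube 1 c a, ρ x with hM
    set K := (∫ x in cube 1 c a, τ x) + M / a ^ 2 with hK
    rw [← Real.sqrt_eq_rpow, ← Real.sqrt_eq_rpow] at hW
    have hsup : ∀ x ∈ cube 1 c a, ρ x ≤ √18 * (√M * √K) := fun x hx =>
      (lu_sup_one ρ (fun y => 2 * √(ρ y) * √(τ y)) hρ (by fun_prop) hρ0
        (fun y => by positivity) hder c a ha x hx).trans hW
    have h3 : ∫ x in cube 1 c a, ρ x ^ (3 : ℕ) ≤ ∫ x in cube 1 c a, 18 * M * K * ρ x := by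
      apply setIntegral_mono_on (lu_cube_int 1 c a _ (hρ.pow 3))
        (lu_cube_int 1 c a _ (continuous_const.mul hρ)) (lu_cube_meas 1 c a)
      intro x hx
      have := pow_le_pow_left₀ (hρ0 x) (hsup x hx) 2
      rw [mul_pow, mul_pow, Real.sq_sqrt (by norm_num), Real.sq_sqrt hM0, Real.sq_sqrt hK0] at this
      have := mul_le_mul_of_nonneg_right this (hρ0 x)
      change ρ x ^ 3 ≤ 18 * M * K * ρ x
      nlinarith
    rw [integral_const_mul] at h3
    calc _ ≤ _ := h3
      _ = _ := by rw [← hM]; ring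
  · have hd2 : 2 ≤ d := h2
    have hd' : (2 : ℝ) ≤ d := by exact_mod_cast hd2
    have hd0 : (0 : ℝ) < d := by linarith
    have hd1 : (0 : ℝ) < d - 1 := by linarith
    set p : ℝ := (d : ℝ) / (d - 1) with hp
    have hp0 : 0 < p := div_pos hd0 hd1
    set s : ℝ := (1 + 2 / (d : ℝ)) / p with hs
    have hsval : s = 1 + 1 / (d : ℝ) - 2 / (d : ℝ) ^ 2 := by
      rw [hs, hp]; field_simp; ring
    have hx : 1 / (d : ℝ) ≤ 1 / 2 := one_div_le_one_div_of_le (by norm_num) hd'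
    have hx0 : 0 < 1 / (d : ℝ) := by positivity
    have hsval' : s = 1 + 1 / (d : ℝ) - 2 * (1 / (d : ℝ)) ^ 2 := by
      rw [hsval]; field_simp
    have hs1 : 1 ≤ s := by rw [hsval']; nlinarith
    have hs2 : s ≤ 3 / 2 := by rw [hsval']; nlinarith
    have hG := lu_gagliardo d hd2 (fun x => ρ x ^ s)
      (fun x => s * ρ x ^ (s - 1) * (2 * √(ρ x) * √(τ x))) (c1 s (by linarith))
      (by have := c1 (s - 1) (by linarith); fun_prop) (fun x => Real.rpow_nonneg (hρ0 x) _)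
      (fun x => mul_nonneg (mul_nonneg (by linarith) (Real.rpow_nonneg (hρ0 x) _)) (by positivity))
      (lu_der_pow d ρ τ hρ0 hder s hs1) c a ha
    have hW := lu_W d ρ τ hρ hτ hρ0 hτ0 s hs1 hs2 c a ha
    have eI : ∀ x, (ρ x ^ s) ^ ((d : ℝ) / (d - 1)) = ρ x ^ (1 + 2 / (d : ℝ)) := fun x => by
      rw [← Real.rpow_mul (hρ0 x)]; congr 1
      rw [hs]; exact div_mul_cancel₀ _ hp0.ne'
    simp only [eI] at hG
    have hA : ∫ x in cube d c a, ρ x ^ (2 * s - 1) ≤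
        (∫ x in cube d c a, ρ x) ^ (2 / (d : ℝ)) *
        (∫ x in cube d c a, ρ x ^ (1 + 2 / (d : ℝ))) ^ (1 - 2 / (d : ℝ)) := by
      have ht : 2 / (d : ℝ) ≤ 1 := by rw [div_le_one hd0]; exact hd'
      have := lu_holder (μ := volume.restrict (cube d c a)) ρ (fun x => ρ x ^ (1 + 2 / (d : ℝ)))
        (lu_cube_int d c a _ hρ) (lu_cube_int d c a _ (c1 _ (by positivity))) hρ0
        (fun x => Real.rpow_nonneg (hρ0 x) _) (2 / d) (1 - 2 / d) (by positivity) (by linarith)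
        (by ring)
      refine le_trans (le_of_eq ?_) this
      congr 1
      funext x
      rcases (hρ0 x).eq_or_lt with h | h
      · rw [← h, Real.zero_rpow (by linarith : 2 * s - 1 ≠ 0),
          Real.zero_rpow (by positivity : 2 / (d : ℝ) ≠ 0), zero_mul]
      · rw [← Real.rpow_mul h.le, ← Real.rpow_add h]
        congr 1
        rw [hsval]; field_simp; ring
    set I := ∫ x in cube d c a, ρ x ^ (1 + 2 / (d : ℝ)) with hI
    set M := ∫ x in cube d c a, ρ x with hM
    set K := (∫ x in cube d c a, τ x) + M / a ^ 2 with hK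
    set A := ∫ x in cube d c a, ρ x ^ (2 * s - 1) with hAdef
    have hI0 : 0 ≤ I := integral_nonneg fun x => Real.rpow_nonneg (hρ0 x) _
    have hA0 : 0 ≤ A := integral_nonneg fun x => Real.rpow_nonneg (hρ0 x) _
    rcases hI0.eq_or_lt with h | h
    · rw [← h]; positivity
    -- combine
    have hw0 : 0 ≤ ∫ x in cube d c a, (s * ρ x ^ (s - 1) * (2 * √(ρ x) * √(τ x)) + ρ x ^ s / a) :=
      integral_nonneg fun x => add_nonneg (mul_nonneg (mul_nonneg (by linarith)
        (Real.rpow_nonneg (hρ0 x) _)) (by positivity))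
        (div_nonneg (Real.rpow_nonneg (hρ0 x) _) ha.le)
    have h4 : I ^ (2 / p) ≤ (√18 * (A ^ (1 / 2 : ℝ) * K ^ (1 / 2 : ℝ))) ^ (2 : ℕ) := by
      have h5 : I ≤ (√18 * (A ^ (1 / 2 : ℝ) * K ^ (1 / 2 : ℝ))) ^ p :=
        hG.trans (Real.rpow_le_rpow hw0 hW hp0.le)
      have h6 := Real.rpow_le_rpow hI0 h5 (by positivity : 0 ≤ 2 / p)
      rw [← Real.rpow_mul (by positivity), mul_div_cancel₀ _ hp0.ne'] at h6
      exact_mod_cast h6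
    rw [← Real.sqrt_eq_rpow, ← Real.sqrt_eq_rpow, mul_pow, mul_pow, Real.sq_sqrt (by norm_num),
      Real.sq_sqrt hA0, Real.sq_sqrt hK0] at h4
    have h7 : I ^ (2 / p) = I * I ^ (1 - 2 / (d : ℝ)) := by
      rw [← Real.rpow_one_add' hI0]
      · congr 1; rw [hp]; field_simp; ring
      · have : 2 / (d : ℝ) ≤ 1 := by rw [div_le_one hd0]; exact hd'
        linarith
    have hB : 0 < I ^ (1 - 2 / (d : ℝ)) := Real.rpow_pos_of_pos h _
    have h8 : I * I ^ (1 - 2 / (d : ℝ)) ≤ 18 * (M ^ (2 / (d : ℝ)) * K) * I ^ (1 - 2 / (d : ℝ)) := by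
      rw [← h7]
      refine h4.trans ?_
      calc 18 * (A * K) ≤ 18 * (M ^ (2 / (d : ℝ)) * I ^ (1 - 2 / (d : ℝ)) * K) := by gcongr
        _ = _ := by ring
    exact le_of_mul_le_mul_right h8 hB

lemma lu_cs {α : Type*} [MeasurableSpace α] {μ : Measure α} (f g : α → ℝ)
    (hf : Integrable (fun x => f x ^ 2) μ) (hg : Integrable (fun x => g x ^ 2) μ)
    (hf0 : ∀ x, 0 ≤ f x) (hg0 : ∀ x, 0 ≤ g x) :
    ∫ x, f x * g x ∂μ ≤ √(∫ x, f x ^ 2 ∂μ) * √(∫ x, g x ^ 2 ∂μ) := by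
  have h := lu_holder _ _ hf hg (fun x => sq_nonneg _) (fun x => sq_nonneg _) (1 / 2) (1 / 2)
    (by norm_num) (by norm_num) (by norm_num)
  simp only [← Real.sqrt_eq_rpow] at h
  simpa only [Real.sqrt_sq (hf0 _), Real.sqrt_sq (hg0 _)] using h

lemma lu_param_deriv {ι : Type*} [Fintype ι] (d : ℕ) (G G' : ℝ → (ι → Fin d → ℝ) → ℝ)
    (hG : Continuous (Function.uncurry G)) (hG' : Continuous (Function.uncurry G'))
    (K : Set (ι → Fin d → ℝ)) (hK : IsCompact K) (hGK : ∀ t, ∀ x ∉ K, G t x = 0)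
    (hGK' : ∀ t, ∀ x ∉ K, G' t x = 0)
    (hder : ∀ t x, HasDerivAt (fun t => G t x) (G' t x) t) (t₀ : ℝ) :
    HasDerivAt (fun t => ∫ x, G t x) (∫ x, G' t₀ x) t₀ := by
  have c1 : ∀ t, Continuous (G t) := fun t => hG.comp (by fun_prop : Continuous fun x => (t, x))
  have c2 : ∀ t, Continuous (G' t) := fun t => hG'.comp (by fun_prop : Continuous fun x => (t, x))
  obtain ⟨C, hC⟩ := ((isCompact_closedBall t₀ 1).prod hK).exists_bound_of_continuousOn
    hG'.continuousOn
  refine (hasDerivAt_integral_of_dominated_loc_of_deriv_le (μ := volume) (F := G) (F' := G')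
    (bound := K.indicator fun _ => C)
    (s := Metric.closedBall t₀ 1) (Metric.closedBall_mem_nhds t₀ one_pos)
    (Filter.Eventually.of_forall fun t => (c1 t).aestronglyMeasurable)
    ((c1 t₀).integrable_of_hasCompactSupport (HasCompactSupport.intro hK (hGK t₀)))
    (c2 t₀).aestronglyMeasurable (Filter.Eventually.of_forall ?_) ?_
    (Filter.Eventually.of_forall fun x t _ => hder t x)).2
  · intro x t ht
    by_cases hx : x ∈ K
    · rw [Set.indicator_of_mem hx]; exact hC (t, x) ⟨ht, hx⟩
    · rw [Set.indicator_of_notMem hx, hGK' t x hx, norm_zero]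
  · rw [integrable_indicator_iff hK.measurableSet]
    exact integrableOn_const hK.measure_lt_top.ne

/-- Insert `y` as the `j`-th particle. -/
def lu_ins (d N : ℕ) (j : Fin N) (y : Fin d → ℝ) (x' : {k : Fin N // k ≠ j} → Fin d → ℝ) :
    Fin N → Fin d → ℝ := fun k => if h : k = j then y else x' ⟨k, h⟩

lemma lu_ins_cont (d N : ℕ) (j : Fin N) :
    Continuous (fun z : (Fin d → ℝ) × ({k : Fin N // k ≠ j} → Fin d → ℝ) =>
      lu_ins d N j z.1 z.2) := by
  refine continuous_pi fun k => ?_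
  unfold lu_ins
  by_cases h : k = j
  · simp only [h, dite_true]; exact continuous_fst
  · simp only [h, dite_false]; fun_prop

lemma lu_ins_self (d N : ℕ) (j : Fin N) (y : Fin d → ℝ) (x' : {k : Fin N // k ≠ j} → Fin d → ℝ) :
    lu_ins d N j y x' j = y := by simp [lu_ins]

lemma lu_ins_deriv (d N : ℕ) (j : Fin N) (y : Fin d → ℝ)
    (x' : {k : Fin N // k ≠ j} → Fin d → ℝ) (p : Fin d) (t : ℝ) :
    HasDerivAt (fun t => lu_ins d N j (Function.update y p t) x')
      (Pi.single j (Pi.single p 1)) t := by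
  rw [hasDerivAt_pi]
  intro k
  unfold lu_ins
  by_cases h : k = j
  · subst h
    simp only [dite_true, Pi.single_eq_same]
    exact hasDerivAt_update y p t
  · simp only [h, dite_false, Pi.single_eq_of_ne h]
    exact hasDerivAt_const _ _

/-- The compact set controlling slices. -/
lemma lu_slice_support (d N : ℕ) (Ψ : (Fin N → Fin d → ℝ) → ℂ) (hs : HasCompactSupport Ψ)
    (j : Fin N) : ∃ K : Set ({k : Fin N // k ≠ j} → Fin d → ℝ), IsCompact K ∧
      ∀ y, ∀ x' ∉ K, lu_ins d N j y x' ∉ tsupport Ψ := by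
  refine ⟨(fun x k => x k.1) '' tsupport Ψ, hs.isCompact.image (by fun_prop), ?_⟩
  intro y x' hx' hmem
  apply hx'
  refine ⟨_, hmem, ?_⟩
  funext k
  simp [lu_ins, k.2]

lemma lu_slice (d N : ℕ) (Ψ : (Fin N → Fin d → ℝ) → ℂ) (hΨ : ContDiff ℝ 1 Ψ)
    (hs : HasCompactSupport Ψ) (j : Fin N) :
    Continuous (fun y => ∫ x', ‖Ψ (lu_ins d N j y x')‖ ^ 2) ∧
    Continuous (fun y => ∫ x', ∑ p : Fin d,
      ‖fderiv ℝ Ψ (lu_ins d N j y x') (Pi.single j (Pi.single p 1))‖ ^ 2) ∧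
    ∀ y p, ∃ D, HasDerivAt (fun t => ∫ x', ‖Ψ (lu_ins d N j (Function.update y p t) x')‖ ^ 2)
      D (y p) ∧ |D| ≤ 2 * (√(∫ x', ‖Ψ (lu_ins d N j y x')‖ ^ 2) *
        √(∫ x', ∑ p : Fin d,
      ‖fderiv ℝ Ψ (lu_ins d N j y x') (Pi.single j (Pi.single p 1))‖ ^ 2)) := by
  obtain ⟨K, hK, hKs⟩ := lu_slice_support d N Ψ hs j
  have hΨc := hΨ.continuous
  have hfc : Continuous (fderiv ℝ Ψ) := hΨ.continuous_fderiv (by norm_num)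
  have hic := lu_ins_cont d N j
  have z1 : ∀ y, ∀ x' ∉ K, Ψ (lu_ins d N j y x') = 0 := fun y x' hx =>
    image_eq_zero_of_notMem_tsupport (hKs y x' hx)
  have z2 : ∀ y, ∀ x' ∉ K, fderiv ℝ Ψ (lu_ins d N j y x') = 0 := fun y x' hx =>
    fderiv_of_notMem_tsupport _ (hKs y x' hx)
  have C1 : Continuous (fun z : (Fin d → ℝ) × ({k : Fin N // k ≠ j} → Fin d → ℝ) =>
      ‖Ψ (lu_ins d N j z.1 z.2)‖ ^ 2) := by
    exact ((hΨc.comp hic).norm).pow 2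
  have C3 : ∀ v : Fin N → Fin d → ℝ, Continuous (fun z : (Fin d → ℝ) × ({k : Fin N // k ≠ j} → Fin d → ℝ) =>
      fderiv ℝ Ψ (lu_ins d N j z.1 z.2) v) := fun v =>
    (hfc.comp hic).clm_apply continuous_const
  have C2 : Continuous (fun z : (Fin d → ℝ) × ({k : Fin N // k ≠ j} → Fin d → ℝ) =>
      ∑ p : Fin d, ‖fderiv ℝ Ψ (lu_ins d N j z.1 z.2) (Pi.single j (Pi.single p 1))‖ ^ 2) :=
    continuous_finsetSum _ fun p _ => ((C3 _).norm).pow 2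
  refine ⟨?_, ?_, ?_⟩
  · rw [← continuousOn_univ]
    exact continuousOn_integral_of_compact_support hK C1.continuousOn
      (fun y x' _ hx => by simp [z1 y x' hx])
  · rw [← continuousOn_univ]
    exact continuousOn_integral_of_compact_support hK C2.continuousOn
      (fun y x' _ hx => by simp [z2 y x' hx])
  · intro y p
    have hu : Continuous (fun w : ℝ × ({k : Fin N // k ≠ j} → Fin d → ℝ) =>
        (Function.update y p w.1, w.2)) :=
      Continuous.prodMk (Continuous.update (A := fun _ : Fin d => ℝ) (continuous_const (y := y)) p
        continuous_fst) continuous_snd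
    refine ⟨_, lu_param_deriv d
      (fun t x' => ‖Ψ (lu_ins d N j (Function.update y p t) x')‖ ^ 2)
      (fun t x' => 2 * inner ℝ (Ψ (lu_ins d N j (Function.update y p t) x'))
        (fderiv ℝ Ψ (lu_ins d N j (Function.update y p t) x') (Pi.single j (Pi.single p 1))))
      (C1.comp hu) ?_ K hK ?_ ?_ ?_ (y p), ?_⟩
    · exact continuous_const.mul (((hΨc.comp hic).comp hu).inner ((C3 _).comp hu))
    · intro t x hx; simp [z1 _ x hx]
    · intro t x hx; simp [z1 _ x hx]
    · intro t x
      have h1 := ((hΨ.differentiable (by norm_num)) (lu_ins d N j (Function.update y p t) x)).hasFDerivAt.comp_hasDerivAt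
        t (lu_ins_deriv d N j y x p t)
      exact h1.norm_sq
    · simp only [Function.update_eq_self]
      have hz : Continuous (fun x' : ({k : Fin N // k ≠ j} → Fin d → ℝ) => (y, x')) := by fun_prop
      have i1 : Integrable (fun x' => ‖Ψ (lu_ins d N j y x')‖ ^ 2) :=
        (C1.comp hz).integrable_of_hasCompactSupport (HasCompactSupport.intro hK
          (fun x hx => by simp [z1 y x hx]))
      have i2 : Integrable (fun x' => ‖fderiv ℝ Ψ (lu_ins d N j y x') (Pi.single j (Pi.single p 1))‖ ^ 2) :=
        ((((C3 (Pi.single j (Pi.single p 1))).norm).pow 2).comp hz).integrable_of_hasCompactSupport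
          (HasCompactSupport.intro hK (fun x hx => by simp [z2 y x hx]))
      have i3 : Integrable (fun x' => ∑ p : Fin d, ‖fderiv ℝ Ψ (lu_ins d N j y x') (Pi.single j (Pi.single p 1))‖ ^ 2) :=
        (C2.comp hz).integrable_of_hasCompactSupport (HasCompactSupport.intro hK
          (fun x hx => by simp [z2 y x hx]))
      have i4 : Integrable (fun x' => ‖Ψ (lu_ins d N j y x')‖ *
          ‖fderiv ℝ Ψ (lu_ins d N j y x') (Pi.single j (Pi.single p 1))‖) :=
        ((((hΨc.comp hic).norm).mul (C3 (Pi.single j (Pi.single p 1))).norm).comp hz).integrable_of_hasCompactSupport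
          (HasCompactSupport.intro hK (fun x hx => by simp [z2 y x hx]))
      rw [integral_const_mul, abs_mul, abs_two]
      refine mul_le_mul_of_nonneg_left ?_ (by norm_num)
      calc _ ≤ ∫ x', ‖Ψ (lu_ins d N j y x')‖ *
          ‖fderiv ℝ Ψ (lu_ins d N j y x') (Pi.single j (Pi.single p 1))‖ := by
            rw [← Real.norm_eq_abs]
            exact norm_integral_le_of_norm_le i4 (Filter.Eventually.of_forall fun x' =>
              norm_inner_le_norm _ _)
        _ ≤ _ := lu_cs _ _ i1 i2 (fun _ => norm_nonneg _) (fun _ => norm_nonneg _)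
        _ ≤ _ := by
            refine mul_le_mul_of_nonneg_left (Real.sqrt_le_sqrt ?_) (Real.sqrt_nonneg _)
            apply integral_mono i2 i3
            intro x'
            exact Finset.single_le_sum (f := fun p => ‖fderiv ℝ Ψ (lu_ins d N j y x') (Pi.single j (Pi.single p 1))‖ ^ 2) (fun _ _ => by positivity) (Finset.mem_univ p)

lemma lu_mp (d N : ℕ) (j : Fin N) : ∃ e : (Fin d → ℝ) × ({k : Fin N // k ≠ j} → Fin d → ℝ) ≃ᵐ
    (Fin N → Fin d → ℝ), MeasurePreserving e volume volume ∧ ∀ z, e z = lu_ins d N j z.1 z.2 := by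
  letI inst : Fintype {k : Fin N // k = j} := Subtype.fintype (fun k => k = j)
  have m1 : MeasurePreserving (MeasurableEquiv.funUnique {k : Fin N // k = j} (Fin d → ℝ))
      volume volume := by
    convert volume_preserving_funUnique {k : Fin N // k = j} (Fin d → ℝ)
  have m2 := volume_preserving_piEquivPiSubtypeProd (fun _ : Fin N => Fin d → ℝ) (fun k => k = j)
  refine ⟨(MeasurableEquiv.prodCongr (MeasurableEquiv.funUnique {k : Fin N // k = j} (Fin d → ℝ)).symm
    (MeasurableEquiv.refl _)).trans
    (MeasurableEquiv.piEquivPiSubtypeProd (fun _ : Fin N => Fin d → ℝ) (fun k => k = j)).symm,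
    ?_, ?_⟩
  · have m3 : MeasurePreserving
        (MeasurableEquiv.prodCongr (MeasurableEquiv.funUnique {k : Fin N // k = j} (Fin d → ℝ)).symm
          (MeasurableEquiv.refl ({k : Fin N // ¬ k = j} → Fin d → ℝ))) volume volume :=
      (m1.symm _).prod
        (MeasurePreserving.id (volume : Measure ({k : Fin N // ¬ k = j} → Fin d → ℝ)))
    exact (m2.symm _).comp m3
  · intro z
    rfl

lemma lu_fubini (d N : ℕ) (j : Fin N) (G : (Fin N → Fin d → ℝ) → ℝ) (hG : Integrable G)
    (Q : Set (Fin d → ℝ)) (hQ : MeasurableSet Q) :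
    Integrable (fun x => Q.indicator (fun _ => G x) (x j)) ∧
    ∫ x, Q.indicator (fun _ => G x) (x j) = ∫ y in Q, ∫ x', G (lu_ins d N j y x') := by
  have hH : Integrable (fun x => Q.indicator (fun _ => G x) (x j)) := by
    have : (fun x : Fin N → Fin d → ℝ => Q.indicator (fun _ => G x) (x j)) =
        ((fun x => x j) ⁻¹' Q).indicator G := by
      funext x; rfl
    rw [this]
    exact hG.indicator (measurable_pi_apply j hQ)
  refine ⟨hH, ?_⟩
  obtain ⟨e, he, hez⟩ := lu_mp d N j
  rw [← he.integral_comp' (fun x => Q.indicator (fun _ => G x) (x j))]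
  have hH2 := (he.integrable_comp_emb e.measurableEmbedding).2 hH
  rw [Measure.volume_eq_prod] at hH2 ⊢
  refine (integral_prod _ hH2).trans ?_
  rw [← integral_indicator hQ]
  congr 1
  funext y
  simp only [Function.comp_apply, hez, lu_ins_self]
  by_cases hy : y ∈ Q <;> simp [hy]

/-- **Local uncertainty principle.**
There is a constant `C₁ > 0` depending only on `d` such that for every `L²`-normalized smooth
compactly supported `N`-body wave function `Ψ` and every cube `Q ⊆ ℝ^d`,
`∫ ∑_j 1_Q(x_j) ‖∇_j Ψ‖² dx ≥ C₁ (∫_Q ρ_Ψ^{1+2/d})/(∫_Q ρ_Ψ)^{2/d} − C₁⁻¹ |Q|^{-2/d} ∫_Q ρ_Ψ`. -/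
theorem local_uncertainty (d : ℕ) (hd : 1 ≤ d) :
    ∃ C₁ > (0 : ℝ), ∀ N : ℕ, 1 ≤ N →
      ∀ Ψ : (Fin N → Fin d → ℝ) → ℂ,
        ContDiff ℝ (⊤ : ℕ∞) Ψ → HasCompactSupport Ψ →
        (∫ x : Fin N → Fin d → ℝ, ‖Ψ x‖ ^ 2) = 1 →
        ∀ (c : Fin d → ℝ) (a : ℝ), 0 < a →
          C₁ * (∫ y in cube d c a, density d N Ψ y ^ (1 + 2 / (d : ℝ))) /
              (∫ y in cube d c a, density d N Ψ y) ^ (2 / (d : ℝ)) -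
            C₁⁻¹ * (a ^ d) ^ (-(2 / (d : ℝ))) * (∫ y in cube d c a, density d N Ψ y) ≤
          ∫ x : Fin N → Fin d → ℝ, ∑ j : Fin N,
            (cube d c a).indicator
              (fun _ => ∑ p : Fin d,
                ‖fderiv ℝ Ψ x (Pi.single j (Pi.single p 1))‖ ^ 2) (x j) := by
  refine ⟨1 / 18, by norm_num, ?_⟩
  intro N _ Ψ hΨ hs _ c a ha
  have hΨ1 : ContDiff ℝ 1 Ψ := hΨ.of_le (by exact_mod_cast le_top)
  have hfc : Continuous (fderiv ℝ Ψ) := hΨ1.continuous_fderiv (by norm_num)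
  have hSl := lu_slice d N Ψ hΨ1 hs
  set τj : Fin N → (Fin d → ℝ) → ℝ := fun j y => ∫ x', ∑ p : Fin d,
      ‖fderiv ℝ Ψ (lu_ins d N j y x') (Pi.single j (Pi.single p 1))‖ ^ 2 with hτj
  set ρj : Fin N → (Fin d → ℝ) → ℝ := fun j y => ∫ x', ‖Ψ (lu_ins d N j y x')‖ ^ 2 with hρj
  have hdens : density d N Ψ = fun y => ∑ j, ρj j y := rfl
  have hρj0 : ∀ j y, 0 ≤ ρj j y := fun j y => integral_nonneg fun x => by positivity
  have hτj0 : ∀ j y, 0 ≤ τj j y := fun j y => integral_nonneg fun x =>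
    Finset.sum_nonneg fun p _ => by positivity
  have hρc : Continuous (density d N Ψ) := by
    rw [hdens]; exact continuous_finsetSum _ fun j _ => (hSl j).1
  have hτc : Continuous (fun y => ∑ j, τj j y) := continuous_finsetSum _ fun j _ => (hSl j).2.1
  have hρ0 : ∀ y, 0 ≤ density d N Ψ y := fun y => by
    rw [hdens]; exact Finset.sum_nonneg fun j _ => hρj0 j y
  have hτ0 : ∀ y, 0 ≤ ∑ j, τj j y := fun y => Finset.sum_nonneg fun j _ => hτj0 j y
  have hcore := lu_core d hd (density d N Ψ) (fun y => ∑ j, τj j y) hρc hτc hρ0 hτ0 (by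
    intro y p
    choose D hD hle using fun j => (hSl j).2.2 y p
    refine ⟨∑ j, D j, ?_, ?_⟩
    · rw [hdens]
      exact HasDerivAt.fun_sum fun j _ => hD j
    · calc |∑ j, D j| ≤ ∑ j, |D j| := Finset.abs_sum_le_sum_abs _ _
        _ ≤ ∑ j, 2 * (√(ρj j y) * √(τj j y)) := Finset.sum_le_sum fun j _ => hle j
        _ = 2 * ∑ j, √(ρj j y) * √(τj j y) := by rw [Finset.mul_sum]
        _ ≤ 2 * (√(∑ j, ρj j y) * √(∑ j, τj j y)) := by
            refine mul_le_mul_of_nonneg_left ?_ (by norm_num)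
            exact Real.sum_sqrt_mul_sqrt_le _ (fun j => hρj0 j y) (fun j => hτj0 j y)
        _ = _ := by rw [hdens]; ring) c a ha
  have hGint : ∀ j : Fin N, Integrable (fun x => ∑ p : Fin d,
      ‖fderiv ℝ Ψ x (Pi.single j (Pi.single p 1))‖ ^ 2) := by
    intro j
    refine Continuous.integrable_of_hasCompactSupport ?_
      (HasCompactSupport.intro hs.isCompact (fun x hx => ?_))
    · exact continuous_finsetSum _ fun p _ => ((hfc.clm_apply continuous_const).norm).pow 2
    · rw [fderiv_of_notMem_tsupport _ hx]; simp
  have hT : ∫ x : Fin N → Fin d → ℝ, ∑ j : Fin N,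
            (cube d c a).indicator
              (fun _ => ∑ p : Fin d,
                ‖fderiv ℝ Ψ x (Pi.single j (Pi.single p 1))‖ ^ 2) (x j) =
      ∫ y in cube d c a, ∑ j, τj j y := by
    rw [integral_finsetSum _ (fun j _ =>
        (lu_fubini d N j _ (hGint j) _ (lu_cube_meas d c a)).1),
      integral_finsetSum _ (fun j _ => lu_cube_int d c a _ (hSl j).2.1)]
    exact Finset.sum_congr rfl fun j _ => (lu_fubini d N j _ (hGint j) _ (lu_cube_meas d c a)).2
  rw [hT]
  have hM0 : 0 ≤ ∫ y in cube d c a, density d N Ψ y := integral_nonneg hρ0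
  have hT0 : 0 ≤ ∫ y in cube d c a, ∑ j, τj j y := integral_nonneg hτ0
  have hd0 : (d : ℝ) ≠ 0 := by positivity
  have hd00 : (0 : ℝ) < d := by positivity
  have ea : (a ^ d) ^ (-(2 / (d : ℝ))) = (a ^ 2)⁻¹ := by
    rw [← Real.rpow_natCast, ← Real.rpow_mul ha.le, mul_neg, mul_div_cancel₀ _ hd0,
      Real.rpow_neg ha.le]
    norm_num
  rw [ea]
  set M := ∫ y in cube d c a, density d N Ψ y with hM
  set T := ∫ y in cube d c a, ∑ j, τj j y with hTdef
  set I := ∫ y in cube d c a, density d N Ψ y ^ (1 + 2 / (d : ℝ)) with hI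
  rcases hM0.eq_or_lt with h | h
  · rw [← h, Real.zero_rpow (by positivity)]
    simpa using hT0
  · have hB : 0 < M ^ (2 / (d : ℝ)) := Real.rpow_pos_of_pos h _
    have h1 : 1 / 18 * I / M ^ (2 / (d : ℝ)) ≤ T + M / a ^ 2 := by
      rw [div_le_iff₀ hB]; linarith
    have h2 : 0 ≤ M / a ^ 2 := by positivity
    have h3 : (1 / 18 : ℝ)⁻¹ * (a ^ 2)⁻¹ * M = 18 * (M / a ^ 2) := by
      rw [div_eq_mul_inv M]; norm_num; ring
    rw [h3]
    linarith
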